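/- Let occ(σ) be the number of occurrences in σ of the mesh pattern Nr. 64, where an occurrence is a pair of indices i < j with a = σ_i < σ_j such that: every element before position i has value less than a; every element strictly between positions i and j has value less than a; and every element after position j has value greater than a. Let E(t,u) = Σ_{n≥0} t^n Σ_{σ∈K_n} u^{occ(σ)}. Then (u(1+ut)(1+t) + (1−u)(1+t+ut)·A(t))·E(t,u) = (u−1)(1+ut)(1+t) + (2−u+t(2+t+u−u^2))·A(t) as formal power series in t over ℚ[u]. In particular, at u = 0 the generating function P(t) for king permutations avoiding this pattern satisfies (1+t)·A(t)·P(t) = ((1+t)^2 + 1)·A(t) − (1+t). -/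

import Mathlib

/-- A permutation of `{0, …, n-1}` is a *king permutation* if consecutive entries
differ by more than 1 in absolute value. -/
def IsKing {n : ℕ} (σ : Equiv.Perm (Fin n)) : Prop :=
  ∀ i : Fin n, ∀ h : (i : ℕ) + 1 < n,
    1 < |((σ ⟨(i : ℕ) + 1, h⟩ : ℕ) : ℤ) - ((σ i : ℕ) : ℤ)|

/-- `kingCount n = A_n`, the number of king permutations of length `n`. -/
noncomputable def kingCount (n : ℕ) : ℕ :=
  Nat.card {σ : Equiv.Perm (Fin n) // IsKing σ}

/-- `A(t)` regarded as a power series over `ℚ[u]` (constant-polynomial coefficients). -/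
noncomputable def kingAu : PowerSeries (Polynomial ℚ) :=
  PowerSeries.mk fun n => (kingCount n : Polynomial ℚ)

/-- `u` viewed as a constant power series over `ℚ[u]`. -/
noncomputable def U : PowerSeries (Polynomial ℚ) :=
  PowerSeries.C (R := Polynomial ℚ) Polynomial.X

/-- `t`, the power series variable. -/
noncomputable def T : PowerSeries (Polynomial ℚ) :=
  PowerSeries.X

/-- An occurrence of the mesh pattern Nr. 64 in `σ`. -/
def OccP {n : ℕ} (σ : Equiv.Perm (Fin n)) (i j : Fin n) : Prop :=
  i < j ∧ σ i < σ j ∧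
    (∀ k : Fin n, k < i → σ k < σ i) ∧
    (∀ k : Fin n, i < k → k < j → σ k < σ i) ∧
    (∀ k : Fin n, j < k → σ i < σ k)

/-- The number of occurrences of the mesh pattern Nr. 64 in `σ`. -/
noncomputable def occP {n : ℕ} (σ : Equiv.Perm (Fin n)) : ℕ :=
  Nat.card {p : Fin n × Fin n // OccP σ p.1 p.2}

-- `E(t,u) = Σ_{n≥0} t^n Σ_{σ∈K_n} u^{occ(σ)}`, a power series in `t` over `ℚ[u]`.
open Classical in
noncomputable def Etu : PowerSeries (Polynomial ℚ) :=
  PowerSeries.mk fun n =>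
    ∑ σ : Equiv.Perm (Fin n),
      if IsKing σ then (Polynomial.X : Polynomial ℚ) ^ occP σ else 0

/-- `A(t) = Σ_{n≥0} A_n t^n` as a formal power series over `ℚ`. -/
noncomputable def kingA : PowerSeries ℚ :=
  PowerSeries.mk fun n => (kingCount n : ℚ)

/-- The generating function for king permutations avoiding the pattern. -/
noncomputable def Pav : PowerSeries ℚ :=
  PowerSeries.mk fun n =>
    (Nat.card {σ : Equiv.Perm (Fin n) // IsKing σ ∧ occP σ = 0} : ℚ)

/-!
Cut a permutation wherever a prefix occupies exactly the smallest values: it becomes a direct sum of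
indecomposable permutations. An occurrence `(i, j)` of the pattern says that the entries before
position `j` are exactly the values up to `σ i`, so it amounts to a cut at `j`, and a nonempty `σ`
has one more component than it has occurrences.

A direct sum of king permutations fails to be king only where a maximal last entry meets a minimal
first one, and an indecomposable permutation ends with its maximum, or starts with its minimum, only
if it has length one. Let `F` count king permutations by length and number of components (marked by
`x`), `G` those not starting with their minimum, and `I` the indecomposable ones of length at least
two. Splitting off the first component gives `F = (1 + x t) G` and `G = 1 + x I F`. Since `I` does
not involve `x`, it can be eliminated between the instances `x = 1` (where `F = A`) and `x = u`.
-/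

section

open Equiv PowerSeries

/-- `IsCut σ j` says that `σ` splits after its first `j` entries, i.e. that these are exactly the
`j` smallest values. The trivial cuts at `0` and at `n` are allowed. -/
def IsCut {n : ℕ} (σ : Perm (Fin n)) (j : ℕ) : Prop :=
  ∀ i : Fin n, (i : ℕ) < j ↔ (σ i : ℕ) < j

/-- An indecomposable permutation: one that is not a direct sum of two nonempty permutations. The
empty permutation does not count as indecomposable. -/
structure IsIndecomposable {n : ℕ} (σ : Perm (Fin n)) : Prop where
  pos : 0 < n
  not_isCut : ∀ j, 0 < j → j < n → ¬IsCut σ j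

open Classical in
/-- The number of components of `σ` in its decomposition as a direct sum of indecomposable
permutations, counted by their right ends: `j` is the last position of a component. -/
noncomputable def numComponents {n : ℕ} (σ : Perm (Fin n)) : ℕ :=
  Nat.count (fun j ↦ IsCut σ (j + 1)) n

/-- The length of the first component of a nonempty permutation. The empty permutation gets the
junk value `1`. -/
noncomputable def firstCut {n : ℕ} (σ : Perm (Fin n)) : ℕ :=
  sInf {j | 0 < j ∧ IsCut σ j}

/-- The first entry of `σ` is its minimum; false for the empty permutation. -/
def StartsWithMin {n : ℕ} (σ : Perm (Fin n)) : Prop :=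
  ∃ i : Fin n, (i : ℕ) = 0 ∧ (σ i : ℕ) = 0

/-- The last entry of `σ` is its maximum; false for the empty permutation. -/
def EndsWithMax {n : ℕ} (σ : Perm (Fin n)) : Prop :=
  ∃ i : Fin n, (i : ℕ) + 1 = n ∧ (σ i : ℕ) + 1 = n

/-- The direct sum `α ⊕ β`: the word of `α` followed by the word of `β` shifted above it. -/
def directSum {m k : ℕ} (α : Perm (Fin m)) (β : Perm (Fin k)) : Perm (Fin (m + k)) :=
  finSumFinEquiv.permCongr (Perm.sumCongr α β)

section SinglePermutation

variable {n : ℕ} {σ : Perm (Fin n)}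

theorem isCut_self (σ : Perm (Fin n)) : IsCut σ n := fun i ↦ by simp

theorem StartsWithMin.isCut_one (h : StartsWithMin σ) : IsCut σ 1 := by
  obtain ⟨i, hi, hσi⟩ := h
  intro j
  have hinj : σ j = σ i ↔ j = i := σ.injective.eq_iff
  rw [Fin.ext_iff, Fin.ext_iff] at hinj
  omega

theorem EndsWithMax.isCut_sub_one (h : EndsWithMax σ) : IsCut σ (n - 1) := by
  obtain ⟨i, hi, hσi⟩ := h
  intro j
  have hinj : σ j = σ i ↔ j = i := σ.injective.eq_iff
  rw [Fin.ext_iff, Fin.ext_iff] at hinj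
  omega

theorem isIndecomposable_of_length_one (σ : Perm (Fin 1)) : IsIndecomposable σ :=
  ⟨one_pos, fun _ _ _ ↦ by omega⟩

theorem isKing_of_length_one (σ : Perm (Fin 1)) : IsKing σ := fun _ _ ↦ by omega

theorem IsIndecomposable.startsWithMin_iff (hσ : IsIndecomposable σ) :
    StartsWithMin σ ↔ n = 1 := by
  constructor
  · intro h
    by_contra hn
    exact hσ.not_isCut 1 one_pos (by have := hσ.pos; omega) h.isCut_one
  · rintro rfl
    exact ⟨0, by simp⟩

theorem IsIndecomposable.endsWithMax_iff (hσ : IsIndecomposable σ) :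
    EndsWithMax σ ↔ n = 1 := by
  have hpos := hσ.pos
  constructor
  · intro h
    by_contra hn
    exact hσ.not_isCut (n - 1) (by omega) (by omega) h.isCut_sub_one
  · rintro rfl
    exact ⟨0, by simp⟩

theorem IsIndecomposable.numComponents_eq_one (hσ : IsIndecomposable σ) : numComponents σ = 1 := by
  classical
  obtain ⟨n, rfl⟩ := Nat.exists_eq_succ_of_ne_zero hσ.pos.ne'
  have hproper : Nat.count (fun j ↦ IsCut σ (j + 1)) n = 0 :=
    Nat.count_iff_forall_not.2 fun j hj ↦ hσ.not_isCut (j + 1) (by omega) (by omega)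
  simp [numComponents, Nat.count_succ, hproper, isCut_self]

theorem firstCut_eq_iff {m : ℕ} :
    firstCut σ = m ↔ 0 < m ∧ IsCut σ m ∧ ∀ j, 0 < j → j < m → ¬IsCut σ j := by
  have hne : {j | 0 < j ∧ IsCut σ j}.Nonempty :=
    ⟨n + 1, n.succ_pos, fun i ↦ by omega⟩
  constructor
  · rintro rfl
    obtain ⟨hpos, hcut⟩ := Nat.sInf_mem hne
    exact ⟨hpos, hcut, fun j hj hlt hj' ↦ Nat.notMem_of_lt_sInf hlt ⟨hj, hj'⟩⟩
  · rintro ⟨hpos, hcut, hmin⟩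
    have hleast : IsLeast {j | 0 < j ∧ IsCut σ j} m :=
      ⟨⟨hpos, hcut⟩, fun j hj ↦ not_lt.1 fun hlt ↦ hmin j hj.1 hlt hj.2⟩
    exact hleast.csInf_eq

theorem firstCut_le (hn : 0 < n) (σ : Perm (Fin n)) : firstCut σ ≤ n :=
  Nat.sInf_le ⟨hn, isCut_self σ⟩

theorem isKing_iff_forall_adjacent :
    IsKing σ ↔ ∀ i j : Fin n, (j : ℕ) = i + 1 →
      (σ i : ℕ) + 1 ≠ σ j ∧ (σ j : ℕ) + 1 ≠ σ i := by
  have hgap : ∀ i j : Fin n, (j : ℕ) = i + 1 →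
      (1 < |((σ j : ℕ) : ℤ) - ((σ i : ℕ) : ℤ)| ↔
        (σ i : ℕ) + 1 ≠ σ j ∧ (σ j : ℕ) + 1 ≠ σ i) := by
    intro i j hij
    have hne : (σ i : ℕ) ≠ σ j := by
      rw [Fin.val_ne_iff, σ.injective.ne_iff, ← Fin.val_ne_iff]
      omega
    rw [lt_abs]
    omega
  constructor
  · intro h i j hij
    have hj : ⟨i + 1, by omega⟩ = j := Fin.ext hij.symm
    exact (hgap i j hij).1 (hj ▸ h i _)
  · exact fun h i hi ↦ (hgap i ⟨i + 1, hi⟩ rfl).2 (h i _ rfl)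

end SinglePermutation

section DirectSum

variable {m k : ℕ} (α : Perm (Fin m)) (β : Perm (Fin k))

@[simp]
theorem directSum_castAdd (i : Fin m) :
    directSum α β (Fin.castAdd k i) = Fin.castAdd k (α i) := by
  simp [directSum, Equiv.permCongr_apply]

@[simp]
theorem directSum_natAdd (i : Fin k) :
    directSum α β (Fin.natAdd m i) = Fin.natAdd m (β i) := by
  simp [directSum, Equiv.permCongr_apply]

theorem directSum_injective :
    Function.Injective fun p : Perm (Fin m) × Perm (Fin k) ↦ directSum p.1 p.2 :=
  finSumFinEquiv.permCongr.injective.comp Perm.sumCongrHom_injective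

theorem isCut_directSum_of_le {j : ℕ} (hj : j ≤ m) : IsCut (directSum α β) j ↔ IsCut α j := by
  have hright (i : Fin k) : ¬m + (i : ℕ) < j := by omega
  simp only [IsCut, Fin.forall_fin_add, directSum_castAdd, directSum_natAdd, Fin.val_castAdd,
    Fin.val_natAdd, hright, iff_self, implies_true, and_true]

theorem isCut_directSum_add (j : ℕ) : IsCut (directSum α β) (m + j) ↔ IsCut β j := by
  have hleft (i : Fin m) : (i : ℕ) < m + j := by omega
  simp only [IsCut, Fin.forall_fin_add, directSum_castAdd, directSum_natAdd, Fin.val_castAdd,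
    Fin.val_natAdd, hleft, add_lt_add_iff_left, iff_self, implies_true, true_and]

theorem isCut_directSum : IsCut (directSum α β) m :=
  (isCut_directSum_of_le α β le_rfl).2 (isCut_self α)

theorem IsCut.exists_directSum {σ : Perm (Fin (m + k))} (h : IsCut σ m) :
    ∃ (α : Perm (Fin m)) (β : Perm (Fin k)), directSum α β = σ := by
  have hmaps : Set.MapsTo (finSumFinEquiv.symm.permCongr σ)
      (Set.range Sum.inl) (Set.range Sum.inl) := by
    rintro _ ⟨i, rfl⟩
    refine ⟨⟨_, (h (Fin.castAdd k i)).1 (by simp)⟩, ?_⟩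
    rw [Equiv.permCongr_apply, Equiv.eq_symm_apply]
    ext
    simp
  obtain ⟨⟨α, β⟩, hαβ⟩ := Perm.mem_sumCongrHom_range_of_perm_mapsTo_inl hmaps
  refine ⟨α, β, ?_⟩
  rw [Perm.sumCongrHom_apply] at hαβ
  rw [directSum, hαβ, ← Equiv.permCongr_symm, Equiv.apply_symm_apply]

theorem firstCut_directSum : firstCut (directSum α β) = m ↔ IsIndecomposable α := by
  rw [firstCut_eq_iff]
  constructor
  · rintro ⟨hpos, -, hmin⟩
    exact ⟨hpos, fun j hj hjm ↦ (isCut_directSum_of_le α β hjm.le).not.1 (hmin j hj hjm)⟩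
  · intro hα
    exact ⟨hα.pos, isCut_directSum α β, fun j hj hjm ↦
      (isCut_directSum_of_le α β hjm.le).not.2 (hα.not_isCut j hj hjm)⟩

theorem numComponents_directSum :
    numComponents (directSum α β) = numComponents α + numComponents β := by
  classical
  unfold numComponents
  rw [Nat.count_add]
  congr 1
  · rw [Nat.count_eq_card_filter_range, Nat.count_eq_card_filter_range]
    congr 1
    exact Finset.filter_congr fun j hj ↦
      isCut_directSum_of_le α β (Finset.mem_range.1 hj)
  · simp only [add_assoc, isCut_directSum_add]

theorem startsWithMin_directSum (hm : 0 < m) :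
    StartsWithMin (directSum α β) ↔ StartsWithMin α := by
  constructor
  · rintro ⟨i, hi, hσi⟩
    obtain rfl : Fin.castAdd k ⟨0, hm⟩ = i := Fin.ext hi.symm
    exact ⟨⟨0, hm⟩, rfl, by rwa [directSum_castAdd] at hσi⟩
  · rintro ⟨i, hi, hαi⟩
    exact ⟨Fin.castAdd k i, hi, by simpa using hαi⟩

theorem isKing_directSum :
    IsKing (directSum α β) ↔
      IsKing α ∧ IsKing β ∧ ¬(EndsWithMax α ∧ StartsWithMin β) := by
  simp only [isKing_iff_forall_adjacent, Fin.forall_fin_add, directSum_castAdd, directSum_natAdd,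
    Fin.val_castAdd, Fin.val_natAdd]
  constructor
  · rintro ⟨hleft, hright⟩
    refine ⟨fun i ↦ (hleft i).1, fun i j hij ↦ ?_, ?_⟩
    · have := (hright i).2 j (by omega)
      omega
    · rintro ⟨⟨i, hi, hαi⟩, j, hj, hβj⟩
      have := (hleft i).2 j (by omega)
      omega
  · rintro ⟨hα, hβ, hjoin⟩
    refine ⟨fun i ↦ ⟨hα i, fun j hij ↦ ?_⟩, fun i ↦ ⟨fun j hij ↦ ?_, fun j hij ↦ ?_⟩⟩
    · have : ¬((α i : ℕ) + 1 = m ∧ (β j : ℕ) = 0) := fun h ↦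
        hjoin ⟨⟨i, by omega, h.1⟩, j, by omega, h.2⟩
      omega
    · omega
    · have := hβ i j (by omega)
      omega

open Classical in
theorem sum_filter_firstCut_eq {M : Type*} [AddCommMonoid M] (f : Perm (Fin (m + k)) → M) :
    ∑ σ with firstCut σ = m, f σ =
      ∑ α : Perm (Fin m) with IsIndecomposable α, ∑ β : Perm (Fin k), f (directSum α β) := by
  rw [← Finset.sum_product']
  symm
  refine Finset.sum_nbij (fun p ↦ directSum p.1 p.2) ?_ directSum_injective.injOn ?_ fun _ _ ↦ rfl
  · rintro ⟨α, β⟩ h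
    simpa [firstCut_directSum] using h
  · intro σ hσ
    have hσ' : firstCut σ = m := by simpa using hσ
    obtain ⟨α, β, rfl⟩ := (firstCut_eq_iff.1 hσ').2.1.exists_directSum
    exact ⟨(α, β), by simpa [firstCut_directSum] using hσ', rfl⟩

end DirectSum

section GeneratingFunctions

variable {R : Type*} [CommSemiring R]

/-- The generating function by length of permutations of all lengths, a permutation `σ` of length
`n` having weight `w n σ`. -/
noncomputable def permSeries (w : ∀ n, Perm (Fin n) → R) : R⟦X⟧ :=
  PowerSeries.mk fun n ↦ ∑ σ, w n σ

open Classical in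
theorem permSeries_eq_of_directSum {w a b : ∀ n, Perm (Fin n) → R}
    (h : ∀ m k (α : Perm (Fin m)) (β : Perm (Fin k)), IsIndecomposable α →
      w (m + k) (directSum α β) = a m α * b k β) :
    permSeries w = C (w 0 1) +
      permSeries (fun m α ↦ if IsIndecomposable α then a m α else 0) * permSeries b := by
  have hfirst : ∀ m k n, m + k = n → ∑ σ : Perm (Fin n) with firstCut σ = m, w n σ =
      (∑ α : Perm (Fin m), if IsIndecomposable α then a m α else 0) * ∑ β, b k β := by
    rintro m k _ rfl
    rw [sum_filter_firstCut_eq, ← Finset.sum_filter, Finset.sum_mul_sum]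
    exact Finset.sum_congr rfl fun α hα ↦ Finset.sum_congr rfl fun β _ ↦
      h m k α β (Finset.mem_filter.1 hα).2
  ext n
  simp only [permSeries, map_add, coeff_mul, coeff_mk]
  rcases n.eq_zero_or_pos with rfl | hn
  · have hempty : ∀ α : Perm (Fin 0), ¬IsIndecomposable α := fun α hα ↦ hα.pos.false
    simp [hempty, Subsingleton.elim default (1 : Perm (Fin 0))]
  · rw [coeff_C, if_neg hn.ne', zero_add, Finset.Nat.sum_antidiagonal_eq_sum_range_succ_mk,
      ← Finset.sum_fiberwise_of_maps_to (g := firstCut) (t := Finset.range n.succ)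
        fun σ _ ↦ Finset.mem_range_succ_iff.2 (firstCut_le hn σ)]
    exact Finset.sum_congr rfl fun m hm ↦
      hfirst m (n - m) n (Nat.add_sub_of_le (Finset.mem_range_succ_iff.1 hm))

open Classical in
/-- The series `F = Σ x^(number of components) t^n` over all king permutations. -/
noncomputable def kingSeries (x : R) : R⟦X⟧ :=
  permSeries fun _ σ ↦ if IsKing σ then x ^ numComponents σ else 0

open Classical in
/-- The series `G = Σ x^(number of components) t^n` over the king permutations that do not start
with their minimum: those that may follow a component of length one. -/
noncomputable def nonMinKingSeries (x : R) : R⟦X⟧ :=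
  permSeries fun _ σ ↦ if IsKing σ ∧ ¬StartsWithMin σ then x ^ numComponents σ else 0

variable (R) in
open Classical in
/-- The series `I = Σ t^n` over the indecomposable king permutations of length at least two. -/
noncomputable def indecKingSeries : R⟦X⟧ :=
  permSeries fun n σ ↦ if IsIndecomposable σ ∧ IsKing σ ∧ n ≠ 1 then 1 else 0

theorem nonMinKingSeries_eq (x : R) :
    nonMinKingSeries x = 1 + C x * indecKingSeries R * kingSeries x := by
  classical
  have hI : permSeries (fun m α ↦
      if IsIndecomposable α then if IsKing α ∧ m ≠ 1 then x else 0 else 0) =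
        C x * indecKingSeries R := by
    ext n
    simp only [permSeries, indecKingSeries, coeff_mk, coeff_C_mul, Finset.mul_sum, mul_ite,
      mul_one, mul_zero, ← ite_and]
  rw [nonMinKingSeries, permSeries_eq_of_directSum
    (a := fun m α ↦ if IsKing α ∧ m ≠ 1 then x else 0)
    (b := fun _ β ↦ if IsKing β then x ^ numComponents β else 0), hI, kingSeries]
  · have h0 : IsKing (1 : Perm (Fin 0)) ∧ ¬StartsWithMin (1 : Perm (Fin 0)) :=
      ⟨fun i ↦ i.elim0, fun ⟨i, _⟩ ↦ i.elim0⟩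
    simp [h0, numComponents]
  · intro m k α β hα
    by_cases hm : m = 1 <;> by_cases hking : IsKing α <;>
      simp [hking, isKing_directSum, startsWithMin_directSum α β hα.pos, numComponents_directSum,
        hα.startsWithMin_iff, hα.endsWithMax_iff, hα.numComponents_eq_one, hm, pow_add]

open Classical in
theorem minKingSeries_eq (x : R) :
    permSeries (fun _ σ ↦ if IsKing σ ∧ StartsWithMin σ then x ^ numComponents σ else 0) =
      C x * X * nonMinKingSeries x := by
  have hpoint : permSeries (fun m α ↦
      if IsIndecomposable α then if m = 1 then x else 0 else 0) = C x * X := by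
    ext n
    simp only [permSeries, coeff_mk, coeff_C_mul, coeff_X]
    by_cases hn : n = 1
    · subst hn
      simp [isIndecomposable_of_length_one]
    · simp [hn]
  rw [permSeries_eq_of_directSum (a := fun m _ ↦ if m = 1 then x else 0)
    (b := fun _ β ↦ if IsKing β ∧ ¬StartsWithMin β then x ^ numComponents β else 0), hpoint,
    nonMinKingSeries]
  · have h0 : ¬StartsWithMin (1 : Perm (Fin 0)) := fun ⟨i, _⟩ ↦ i.elim0
    simp [h0]
  · intro m k α β hα
    by_cases hm : m = 1
    · subst hm
      simp [isKing_directSum, startsWithMin_directSum α β hα.pos, numComponents_directSum,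
        hα.startsWithMin_iff, hα.endsWithMax_iff, hα.numComponents_eq_one, isKing_of_length_one,
        pow_add]
    · simp [startsWithMin_directSum α β hα.pos, hα.startsWithMin_iff, hm]

theorem kingSeries_eq (x : R) : kingSeries x = (1 + C x * X) * nonMinKingSeries x := by
  rw [add_mul, one_mul, ← minKingSeries_eq]
  ext n
  simp only [kingSeries, nonMinKingSeries, permSeries, map_add, coeff_mk,
    ← Finset.sum_add_distrib]
  refine Finset.sum_congr rfl fun σ _ ↦ ?_
  by_cases hking : IsKing σ <;> by_cases hmin : StartsWithMin σ <;> simp [hking, hmin]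

end GeneratingFunctions

theorem kingSeries_elimination {R : Type*} [CommRing R] (x : R) :
    C x * (1 + C x * X) * (kingSeries 1 - (1 + X)) * kingSeries x =
      (1 + X) * (kingSeries x - (1 + C x * X)) * kingSeries 1 := by
  have hF (y : R) : kingSeries y =
      (1 + C y * X) * (1 + C y * indecKingSeries R * kingSeries y) := by
    rw [← nonMinKingSeries_eq, ← kingSeries_eq]
  have hone := hF 1
  rw [map_one, one_mul, one_mul] at hone
  linear_combination C x * (1 + C x * X) * kingSeries x * hone - (1 + X) * kingSeries 1 * hF x

section Occurrences

variable {n : ℕ}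

theorem occP_iff_forall_lt_iff_le (σ : Perm (Fin n)) (i j : Fin n) :
    OccP σ i j ↔ ∀ k, k < j ↔ σ k ≤ σ i := by
  constructor
  · rintro ⟨-, hσij, hbefore, hbetween, hafter⟩ k
    constructor
    · intro hkj
      rcases lt_trichotomy k i with hki | rfl | hik
      · exact (hbefore k hki).le
      · exact le_rfl
      · exact (hbetween k hik hkj).le
    · contrapose!
      intro hjk
      rcases hjk.eq_or_lt with rfl | hjk
      · exact hσij
      · exact hafter k hjk
  · intro h
    have hlt (k : Fin n) (hne : k ≠ i) (hkj : k < j) : σ k < σ i :=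
      ((h k).1 hkj).lt_of_ne (σ.injective.ne hne)
    have hij : i < j := (h i).2 le_rfl
    exact ⟨hij, not_le.1 ((h j).not.1 (lt_irrefl j)), fun k hk ↦ hlt k hk.ne (hk.trans hij),
      fun k hik hkj ↦ hlt k hik.ne' hkj, fun k hjk ↦ not_le.1 ((h k).not.1 hjk.not_gt)⟩

theorem add_one_eq_of_forall_lt_iff_le {σ : Perm (Fin n)} {j v : Fin n}
    (h : ∀ k, k < j ↔ σ k ≤ v) : (v : ℕ) + 1 = j := by
  have hcard : (Finset.Iio j).card = (Finset.Iic v).card :=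
    Finset.card_bijective σ σ.bijective (by simpa using h)
  simpa using hcard.symm

theorem occP_iff_isCut (σ : Perm (Fin n)) (i j : Fin n) :
    OccP σ i j ↔ (σ i : ℕ) + 1 = j ∧ IsCut σ j := by
  rw [occP_iff_forall_lt_iff_le]
  have hcut (hj : (σ i : ℕ) + 1 = j) : (∀ k, k < j ↔ σ k ≤ σ i) ↔ IsCut σ j := by
    simp only [IsCut, Fin.lt_def, Fin.le_def, ← hj, Nat.lt_succ_iff]
  exact ⟨fun h ↦ have hj := add_one_eq_of_forall_lt_iff_le h; ⟨hj, (hcut hj).1 h⟩,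
    fun ⟨hj, h⟩ ↦ (hcut hj).2 h⟩

theorem numComponents_eq_occP_add_one (σ : Perm (Fin (n + 1))) :
    numComponents σ = occP σ + 1 := by
  classical
  let occ (j : {j : ℕ // j < n ∧ IsCut σ (j + 1)}) :
      {p : Fin (n + 1) × Fin (n + 1) // OccP σ p.1 p.2} :=
    ⟨(σ.symm ⟨j, by omega⟩, ⟨j + 1, by omega⟩), (occP_iff_isCut _ _ _).2 (by simp [j.2.2])⟩
  have hocc : Function.Bijective occ := by
    constructor
    · intro j j' h
      simpa [occ, Subtype.ext_iff] using h
    · rintro ⟨⟨i, j⟩, hp⟩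
      obtain ⟨hij, hcut⟩ := (occP_iff_isCut σ i j).1 hp
      refine ⟨⟨σ i, by omega, hij ▸ hcut⟩, ?_⟩
      simp [occ, hij]
  rw [numComponents, Nat.count_succ, if_pos (isCut_self σ), Nat.count_eq_card_filter_range, occP,
    ← Nat.card_eq_of_bijective occ hocc, Nat.subtype_card]
  simp

end Occurrences

theorem kingSeries_one : kingSeries 1 = kingAu := by
  classical
  ext1 n
  simp [kingSeries, permSeries, kingAu, kingCount, Nat.card_eq_fintype_card, Fintype.card_subtype]

theorem kingSeries_X_eq : kingSeries Polynomial.X = 1 + U * (Etu - 1) := by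
  classical
  ext1 n
  rw [U, map_add, coeff_C_mul, map_sub, coeff_one, kingSeries, permSeries, Etu, coeff_mk, coeff_mk]
  rcases n with _ | n
  · have h0 (σ : Perm (Fin 0)) : IsKing σ := fun i ↦ i.elim0
    simp [h0, numComponents, occP]
  · simp [numComponents_eq_occP_add_one, pow_succ', Finset.mul_sum]

theorem map_eval_zero_Etu : PowerSeries.map (Polynomial.evalRingHom 0) Etu = Pav := by
  classical
  ext n
  simp only [Etu, Pav, coeff_map, coeff_mk, map_sum, apply_ite, map_pow, map_zero,
    Polynomial.coe_evalRingHom, Polynomial.eval_X, zero_pow_eq, ← ite_and, Finset.sum_boole,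
    Nat.card_eq_fintype_card, Fintype.card_subtype]

theorem map_eval_zero_kingAu : PowerSeries.map (Polynomial.evalRingHom 0) kingAu = kingA := by
  ext n
  simp [kingAu, kingA]

end

theorem statement_19 :
    (U * (1 + U * T) * (1 + T) + (1 - U) * (1 + T + U * T) * kingAu) * Etu
      = (U - 1) * (1 + U * T) * (1 + T)
          + (2 - U + T * (2 + T + U - U ^ 2)) * kingAu ∧
    (1 + PowerSeries.X) * kingA * Pav
      = ((1 + PowerSeries.X) ^ 2 + 1) * kingA - (1 + PowerSeries.X) := by
  have hU : U ≠ 0 := (map_ne_zero_iff _ PowerSeries.C_injective).2 Polynomial.X_ne_zero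
  have hE : (U * (1 + U * T) * (1 + T) + (1 - U) * (1 + T + U * T) * kingAu) * Etu
      = (U - 1) * (1 + U * T) * (1 + T)
          + (2 - U + T * (2 + T + U - U ^ 2)) * kingAu := by
    have helim := kingSeries_elimination (Polynomial.X : Polynomial ℚ)
    rw [kingSeries_one, kingSeries_X_eq] at helim
    change U * (1 + U * T) * (kingAu - (1 + T)) * _ = (1 + T) * (_ - (1 + U * T)) * _ at helim
    apply mul_left_cancel₀ hU
    linear_combination -helim
  refine ⟨hE, ?_⟩
  have hmap := congrArg (PowerSeries.map (Polynomial.evalRingHom 0)) hE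
  have hU0 : PowerSeries.map (Polynomial.evalRingHom (0 : ℚ)) U = 0 := by simp [U]
  have hT0 : PowerSeries.map (Polynomial.evalRingHom (0 : ℚ)) T = PowerSeries.X := by simp [T]
  simp only [map_mul, map_add, map_sub, map_pow, map_one, map_ofNat (PowerSeries.map _), hU0, hT0,
    map_eval_zero_Etu, map_eval_zero_kingAu] at hmap
  linear_combination hmap
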